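/- arXiv:2604.06513 — 2 statements merged into one kernel-verified Lean document; each statement's English description precedes it below -/
import Mathlib

section
/- Let q = p^m with p prime and m ≥ 1, and let k be a positive divisor of q−1. Suppose there exists a natural number d with d ∣ m, d > 1, such that (k : ℤ) divides Φ_d(p), the value at p of the d-th cyclotomic polynomial over ℤ. Then Spec(Γ(k,q)) ⊆ ℤ. -/
open scoped Classical

noncomputable instance (p n : ℕ) [Fact p.Prime] : Fintype (GaloisField p n) :=
  Fintype.ofFinite _

/-!
The additive characters of `F = 𝔽_q` are eigenvectors of the Cayley digraph `Γ(k, q)`, so its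
eigenvalues are the Gauss periods `∑ s ∈ R_k, ψ s`. As `(p - 1) Φ_d(p)` divides `q - 1` and `Fˣ` is
cyclic, every element of `𝔽_pˣ` is a `k`-th power in `F`, so `R_k` is stable under scaling by
`𝔽_pˣ`. Averaging `ψ` over this scaling shows that each period is rational; being a sum of roots
of unity it is also an algebraic integer, hence an integer.
-/

open Polynomial in
theorem sub_one_mul_eval_cyclotomic_dvd_pow_sub_one {R : Type*} [CommRing R] (a : R) {d m : ℕ}
    (hd : 1 < d) (hdm : d ∣ m) : (a - 1) * (cyclotomic d R).eval a ∣ a ^ m - 1 := by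
  have one_mem : 1 ∈ d.properDivisors := Nat.mem_properDivisors.mpr ⟨one_dvd d, hd⟩
  have dvd_pow_d : (a - 1) * (cyclotomic d R).eval a ∣ a ^ d - 1 := by
    simpa using eval_dvd (x := a)
      (X_pow_sub_one_mul_cyclotomic_dvd_X_pow_sub_one_of_dvd R one_mem)
  exact dvd_pow_d.trans (dvd_pow_sub_one_of_dvd hdm)

theorem sub_one_mul_dvd_pow_sub_one_of_dvd_eval_cyclotomic {a k d m : ℕ} (ha : 0 < a)
    (hd : 1 < d) (hdm : d ∣ m) (hk : (k : ℤ) ∣ (Polynomial.cyclotomic d ℤ).eval (a : ℤ)) :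
    (a - 1) * k ∣ a ^ m - 1 := by
  have dvd_int : ((a : ℤ) - 1) * k ∣ (a : ℤ) ^ m - 1 :=
    (mul_dvd_mul_left _ hk).trans (sub_one_mul_eval_cyclotomic_dvd_pow_sub_one _ hd hdm)
  have one_le_pow : 1 ≤ a ^ m := Nat.one_le_pow m a ha
  zify [Nat.one_le_of_lt ha, one_le_pow]
  exact dvd_int

theorem exists_pow_eq_of_pow_eq_one_of_mul_dvd_card {G : Type*} [Group G] [IsCyclic G] [Finite G]
    {n k : ℕ} (h : n * k ∣ Nat.card G) {c : G} (hc : c ^ n = 1) : ∃ z : G, z ^ k = c := by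
  obtain ⟨g, hg⟩ := IsCyclic.exists_generator (α := G)
  obtain ⟨j, rfl⟩ : ∃ j : ℕ, g ^ j = c := mem_powers_iff_mem_zpowers.mpr (hg c)
  have n_pos : 0 < n := Nat.pos_of_mul_pos_right (Nat.pos_of_dvd_of_pos h Nat.card_pos)
  have mul_dvd : n * k ∣ n * j := by
    rw [← orderOf_eq_card_of_forall_mem_zpowers hg] at h
    exact h.trans (orderOf_dvd_of_pow_eq_one (by rwa [mul_comm, pow_mul]))
  obtain ⟨r, rfl⟩ := Nat.dvd_of_mul_dvd_mul_left n_pos mul_dvd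
  exact ⟨g ^ r, by rw [← pow_mul, mul_comm]⟩

theorem exists_pow_eq_map_algebraMap_of_dvd {K F : Type*} [Field K] [Field F] [Finite F]
    [Algebra K F] {k : ℕ} (hk : (Nat.card K - 1) * k ∣ Nat.card F - 1) (c : Kˣ) :
    ∃ w : Fˣ, w ^ k = Units.map (algebraMap K F) c := by
  refine exists_pow_eq_of_pow_eq_one_of_mul_dvd_card (n := Nat.card K - 1) ?_ ?_
  · rwa [Nat.card_units]
  · rw [← map_pow, ← Nat.card_units, pow_card_eq_one', map_one]

section CayleyDigraph

open Matrix

variable {G : Type*} [AddCommGroup G] [Fintype G] [DecidableEq G]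

/-- The adjacency matrix, with entries in `R`, of the Cayley digraph `Cay(G, S)`, which has an arc
from `x` to `y` iff `y - x ∈ S`. -/
def cayleyAdjMatrix (R : Type*) [Zero R] [One R] (S : Finset G) : Matrix G G R :=
  of fun x y => if y - x ∈ S then 1 else 0

theorem cayleyAdjMatrix_mulVec_addChar {R : Type*} [CommSemiring R] (S : Finset G)
    (ψ : AddChar G R) : cayleyAdjMatrix R S *ᵥ ψ = (∑ s ∈ S, ψ s) • ⇑ψ := by
  ext x
  calc (cayleyAdjMatrix R S *ᵥ ψ) x
      = ∑ y, if y - x ∈ S then ψ y else 0 := by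
        simp [cayleyAdjMatrix, mulVec, dotProduct]
    _ = ∑ s, if s ∈ S then ψ (s + x) else 0 :=
        Fintype.sum_equiv (Equiv.subRight x) _ _ fun y => by simp
    _ = ((∑ s ∈ S, ψ s) • ⇑ψ) x := by
        simp [AddChar.map_add_eq_mul, Finset.sum_mul]

theorem spectrum_cayleyAdjMatrix (S : Finset G) :
    spectrum ℂ (cayleyAdjMatrix ℂ S) = Set.range fun ψ : AddChar G ℂ => ∑ s ∈ S, ψ s := by
  let b := AddChar.complexBasis G
  have diagonalized : toLin' (cayleyAdjMatrix ℂ S) =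
      toLin b b (diagonal fun ψ : AddChar G ℂ => ∑ s ∈ S, ψ s) := by
    refine b.ext fun ψ => ?_
    rw [(hasEigenvector_toLin_diagonal _ ψ b).apply_eq_smul, toLin'_apply,
      AddChar.complexBasis_apply, cayleyAdjMatrix_mulVec_addChar]
  rw [← spectrum_toLin', diagonalized, spectrum_toLin, spectrum_diagonal]

end CayleyDigraph

theorem isIntegral_addChar_apply {G R : Type*} [AddMonoid G] [CommRing R] (ψ : AddChar G R)
    {s : G} (hs : IsOfFinAddOrder s) : IsIntegral ℤ (ψ s) := by
  have pow_eq_one : ψ s ^ addOrderOf s = 1 := by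
    rw [← AddChar.map_nsmul_eq_pow, addOrderOf_nsmul_eq_zero, AddChar.map_zero_eq_one]
  exact IsIntegral.of_pow hs.addOrderOf_pos (pow_eq_one ▸ isIntegral_one)

theorem isOfFinAddOrder_of_finite_ring_module (K : Type*) {V : Type*} [Ring K] [Finite K]
    [AddCommGroup V] [Module K V] (s : V) : IsOfFinAddOrder s := by
  refine isOfFinAddOrder_iff_nsmul_eq_zero.mpr ⟨Nat.card K, Nat.card_pos, ?_⟩
  have : Fintype K := Fintype.ofFinite K
  rw [← Nat.cast_smul_eq_nsmul K, Nat.card_eq_fintype_card, Nat.cast_card_eq_zero, zero_smul]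

section CharacterSum

open scoped Pointwise

theorem sum_smul_eq_sum_of_smul_finset_eq {H X M : Type*} [Group H] [MulAction H X]
    [DecidableEq X] [AddCommMonoid M] {c : H} {S : Finset X} (hS : c • S = S) (f : X → M) :
    ∑ s ∈ S, f (c • s) = ∑ s ∈ S, f s := by
  refine Finset.sum_equiv (MulAction.toPerm c) (fun s => ?_) fun _ _ => rfl
  rw [MulAction.toPerm_apply, ← Finset.smul_mem_smul_finset_iff c, hS]

theorem sum_units_eq_sum_sub_apply_zero {K M : Type*} [GroupWithZero K] [Fintype K] [DecidableEq K]
    [AddCommGroup M] (f : K → M) : ∑ c : Kˣ, f c = ∑ c, f c - f 0 := by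
  rw [Fintype.sum_eq_add_sum_subtype_ne f 0, add_sub_cancel_left]
  exact Fintype.sum_equiv unitsEquivNeZero _ _ fun _ => rfl

variable {K V : Type*} [Field K] [AddCommGroup V] [Module K V]

theorem sum_units_addChar_smul_mem_range_intCast [Fintype K] [DecidableEq K] {R : Type*}
    [CommRing R] [IsDomain R] (ψ : AddChar V R) (s : V) :
    ∑ c : Kˣ, ψ (c • s) ∈ Set.range ((↑) : ℤ → R) := by
  let χ : AddChar K R := ψ.compAddMonoidHom (LinearMap.toSpanSingleton K V s).toAddMonoidHom
  have sum_units : ∑ c : Kˣ, ψ (c • s) = ∑ c, χ c - χ 0 := sum_units_eq_sum_sub_apply_zero χ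
  refine ⟨(if χ = 0 then Fintype.card K else 0) - 1, ?_⟩
  rw [sum_units, AddChar.sum_eq_ite, AddChar.map_zero_eq_one]
  push_cast
  rfl

theorem sum_addChar_mem_range_intCast [Finite K] [DecidableEq V] {L : Type*} [Field L] [CharZero L]
    {S : Finset V} (hS : ∀ c : Kˣ, c • S = S) (ψ : AddChar V L) :
    ∑ s ∈ S, ψ s ∈ Set.range ((↑) : ℤ → L) := by
  have : Fintype K := Fintype.ofFinite K
  choose N hN using sum_units_addChar_smul_mem_range_intCast (K := K) ψ
  have card_mul_eq : (Fintype.card Kˣ : L) * ∑ s ∈ S, ψ s = ∑ s ∈ S, (N s : L) :=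
    calc (Fintype.card Kˣ : L) * ∑ s ∈ S, ψ s
        = ∑ c : Kˣ, ∑ s ∈ S, ψ (c • s) := by
          simp [sum_smul_eq_sum_of_smul_finset_eq (hS _) ψ]
      _ = ∑ s ∈ S, ∑ c : Kˣ, ψ (c • s) := Finset.sum_comm
      _ = ∑ s ∈ S, (N s : L) := Finset.sum_congr rfl fun s _ => (hN s).symm
  have rational : ∃ r : ℚ, ∑ s ∈ S, ψ s = r := by
    refine ⟨(∑ s ∈ S, N s) / Fintype.card Kˣ, ?_⟩
    push_cast
    rw [← card_mul_eq, mul_div_cancel_left₀ _ (Nat.cast_ne_zero.mpr Fintype.card_ne_zero)]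
  have integral : IsIntegral ℤ (∑ s ∈ S, ψ s) :=
    IsIntegral.sum _ fun s _ =>
      isIntegral_addChar_apply ψ (isOfFinAddOrder_of_finite_ring_module K s)
  obtain ⟨n, hn⟩ := integral.exists_int_iff_exists_rat.mp rational
  exact ⟨n, hn.symm⟩

end CharacterSum

section NonzeroPowers

open scoped Pointwise

variable (F : Type*) [Field F] [Fintype F]

/-- The set `R_k` of nonzero `k`-th powers in a finite field `F`, the connection set of the
generalized Paley graph `Γ(k, |F|)`. -/
noncomputable def nonzeroPowers (k : ℕ) : Finset F :=
  Finset.univ.filter fun x => ∃ z, z ≠ 0 ∧ z ^ k = x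

variable {F}

theorem mem_nonzeroPowers {k : ℕ} {x : F} : x ∈ nonzeroPowers F k ↔ ∃ z, z ≠ 0 ∧ z ^ k = x := by
  simp [nonzeroPowers]

theorem pow_smul_nonzeroPowers [DecidableEq F] (w : Fˣ) (k : ℕ) :
    w ^ k • nonzeroPowers F k = nonzeroPowers F k := by
  refine Finset.eq_of_subset_of_card_le (fun x hx => ?_) (Finset.card_smul_finset _ _).ge
  obtain ⟨y, hy, rfl⟩ := Finset.mem_smul_finset.mp hx
  obtain ⟨z, hz, rfl⟩ := mem_nonzeroPowers.mp hy
  exact mem_nonzeroPowers.mpr ⟨w * z, mul_ne_zero w.ne_zero hz, by simp [Units.smul_def, mul_pow]⟩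

theorem units_smul_nonzeroPowers_of_dvd [DecidableEq F] {K : Type*} [Field K] [Algebra K F]
    {k : ℕ} (hk : (Nat.card K - 1) * k ∣ Nat.card F - 1) (c : Kˣ) :
    c • nonzeroPowers F k = nonzeroPowers F k := by
  obtain ⟨w, hw⟩ := exists_pow_eq_map_algebraMap_of_dvd (F := F) hk c
  have smul_eq (x : F) : c • x = w ^ k • x := by
    simp [hw, Units.smul_def, Algebra.smul_def]
  calc c • nonzeroPowers F k
      = w ^ k • nonzeroPowers F k := Finset.image_congr fun x _ => smul_eq x
    _ = nonzeroPowers F k := pow_smul_nonzeroPowers w k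

end NonzeroPowers

open scoped Pointwise in
theorem gpGraph_integral_of_dvd_cyclotomic_general {F : Type*} [Field F] [Fintype F]
    [DecidableEq F] (K : Type*) [Field K] [Algebra K F] {k : ℕ}
    (hk : (Nat.card K - 1) * k ∣ Nat.card F - 1) (A : Matrix F F ℂ)
    (hA : ∀ x y, A x y = if ∃ z, z ≠ 0 ∧ z ^ k = y - x then 1 else 0) :
    spectrum ℂ A ⊆ Set.range ((↑) : ℤ → ℂ) := by
  have A_eq : A = cayleyAdjMatrix ℂ (nonzeroPowers F k) := by
    ext x y
    simp [hA, cayleyAdjMatrix, mem_nonzeroPowers]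
  rw [A_eq, spectrum_cayleyAdjMatrix]
  rintro _ ⟨ψ, rfl⟩
  have stable (c : Kˣ) : c • nonzeroPowers F k = nonzeroPowers F k :=
    units_smul_nonzeroPowers_of_dvd hk c
  have : Finite K := Finite.of_injective _ (algebraMap K F).injective
  exact sum_addChar_mem_range_intCast stable ψ

theorem gpGraph_integral_of_dvd_cyclotomic
    (p m k : ℕ) [Fact p.Prime] (hm : 1 ≤ m) (hk : 0 < k)
    (hkdvd : k ∣ p ^ m - 1)
    (d : ℕ) (hdm : d ∣ m) (hd : 1 < d)
    (hdvd : (k : ℤ) ∣ (Polynomial.cyclotomic d ℤ).eval (p : ℤ))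
    (A : Matrix (GaloisField p m) (GaloisField p m) ℂ)
    (hA : ∀ x y, A x y = if ∃ z, z ≠ 0 ∧ z ^ k = y - x then 1 else 0) :
    spectrum ℂ A ⊆ Set.range ((↑) : ℤ → ℂ) := by
  refine gpGraph_integral_of_dvd_cyclotomic_general (ZMod p) ?_ A hA
  rw [Nat.card_zmod, GaloisField.card p m (Nat.one_le_iff_ne_zero.mp hm)]
  exact sub_one_mul_dvd_pow_sub_one_of_dvd_eval_cyclotomic (Fact.out : p.Prime).pos hd hdm hdvd
end

section
/- Let p be an odd prime, q = p^m with m ≥ 1, and k a positive divisor of q−1 with −1 ∉ R_k (i.e. Γ = Γ(k,q) is directed). Set n = (q−1)/k and let a be the least positive integer such that n divides p^a − 1. Let A be the adjacency matrix of Γ. Then the set spectrum ℂ A has at least 3 elements; and it has exactly 3 elements if and only if k = 2·(p^m−1)/(p^a−1) and p^a ≡ 3 (mod 4). -/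
open scoped Classical

/-!
The eigenvalues of the Cayley digraph of a finite abelian group `G` with connection set `S` are the
character sums `∑ s ∈ S, χ s`. The trivial character gives `#S`, and if `S ≠ -S` then some character
gives a non-real sum, so that it and its conjugate are two further eigenvalues.

If these three are the only eigenvalues and `S` is disjoint from `-S`, then the symmetrised graph,
with connection set `S ∪ -S`, has only the two eigenvalues `2 * #S` and `2 * Re θ`. Its adjacency
matrix satisfies a quadratic equation, which forces `{0} ∪ S ∪ -S` to be a subgroup of order
`2 * #S + 1`. For `S` the group of `n`-th roots of unity in the field of `p ^ m` elements,
`2 * n + 1` is thus a power of `p`, and it can only be `p ^ a`.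

Conversely, if `2 * n + 1 = p ^ a`, the `n`-th roots of unity are the nonzero squares of the
subfield of order `p ^ a`. A character is either trivial on that subfield or restricts to a
multiplicative shift, by a square or the negative of a square, of one fixed nontrivial character.
-/

open Finset Polynomial
open scoped ComplexConjugate Pointwise

section Diagonalization

theorem spectrum_eq_range_of_apply_basis {ι K V : Type*} [Finite ι] [Field K] [AddCommGroup V]
    [Module K V] (b : Module.Basis ι K V) {f : Module.End K V} {μ : ι → K}
    (h : ∀ i, f (b i) = μ i • b i) : spectrum K f = Set.range μ := by
  have := Fintype.ofFinite ι
  have toMatrix_eq : LinearMap.toMatrix b b f = Matrix.diagonal μ := by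
    ext i j
    rw [LinearMap.toMatrix_apply, h, map_smul, b.repr_self, Finsupp.smul_apply,
      Finsupp.single_apply, Matrix.diagonal_apply]
    split_ifs <;> simp_all
  rw [← LinearMap.spectrum_toMatrix f b, toMatrix_eq, spectrum_diagonal]

theorem matrix_ext_addChar {G : Type*} [AddCommGroup G] [Fintype G] {M N : Matrix G G ℂ}
    (h : ∀ χ : AddChar G ℂ, M.mulVec χ = N.mulVec χ) : M = N := by
  refine Matrix.toLin'.injective ((AddChar.complexBasis G).ext fun χ => ?_)
  rw [AddChar.complexBasis_apply, Matrix.toLin'_apply, Matrix.toLin'_apply, h]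

end Diagonalization

section CayleyDigraph

theorem ncard_natCast_self_conj (N : ℕ) {z : ℂ} (hz : conj z ≠ z) :
    ({(N : ℂ), z, conj z} : Set ℂ).ncard = 3 := by
  refine Set.ncard_eq_three.2 ⟨N, z, conj z, ?_, ?_, hz.symm, rfl⟩
  · rintro rfl
    exact hz (Complex.conj_natCast N)
  · intro h
    have self_eq : z = N := by rw [← Complex.conj_conj z, ← h, Complex.conj_natCast]
    exact hz (h.symm.trans self_eq.symm)

variable {G : Type*} [AddCommGroup G]

/-- The sum of a character over `S`, which is the eigenvalue of the Cayley digraph with connection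
set `S` at the eigenvector `χ`. -/
noncomputable def charSum (S : Finset G) (χ : AddChar G ℂ) : ℂ :=
  ∑ s ∈ S, χ s

/-- The adjacency matrix of the Cayley digraph on `G` with connection set `S`: there is an arc from
`x` to `y` when `y - x ∈ S`. -/
noncomputable def cayleyMatrix [DecidableEq G] (S : Finset G) : Matrix G G ℂ :=
  Matrix.of fun x y => if y - x ∈ S then 1 else 0

theorem charSum_eq_card {S : Finset G} {χ : AddChar G ℂ} (h : ∀ s ∈ S, χ s = 1) :
    charSum S χ = #S := by
  rw [charSum, sum_congr rfl h, sum_const, nsmul_one]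

theorem charSum_inv [Finite G] (S : Finset G) (χ : AddChar G ℂ) :
    charSum S χ⁻¹ = conj (charSum S χ) := by
  rw [charSum, charSum, map_sum]
  exact sum_congr rfl fun s _ => χ.map_neg_eq_conj s

variable [DecidableEq G]

theorem charSum_neg [Finite G] (S : Finset G) (χ : AddChar G ℂ) :
    charSum (-S) χ = conj (charSum S χ) := by
  rw [← charSum_inv, charSum, sum_neg_index]
  rfl

theorem charSum_union_neg [Finite G] {S : Finset G} (hS : Disjoint S (-S)) (χ : AddChar G ℂ) :
    charSum (S ∪ -S) χ = charSum S χ + conj (charSum S χ) := by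
  rw [← charSum_neg]
  exact sum_union hS

theorem cayleyMatrix_injective : Function.Injective (cayleyMatrix : Finset G → Matrix G G ℂ) := by
  intro S T h
  ext x
  have entry_eq : cayleyMatrix S 0 x = cayleyMatrix T 0 x := by rw [h]
  by_cases hS : x ∈ S <;> by_cases hT : x ∈ T <;> simp [cayleyMatrix, hS, hT] at entry_eq ⊢

variable [Fintype G]

theorem cayleyMatrix_mulVec_addChar (S : Finset G) (χ : AddChar G ℂ) :
    (cayleyMatrix S).mulVec χ = charSum S χ • ⇑χ := by
  ext x
  calc ∑ y, (if y - x ∈ S then 1 else 0) * χ y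
      = ∑ s, (if s ∈ S then 1 else 0) * χ (s + x) := by
        rw [← Equiv.sum_comp (Equiv.addRight x)]
        simp only [Equiv.coe_addRight, add_sub_cancel_right]
    _ = ∑ s ∈ S, χ s * χ x := by
        simp only [ite_mul, one_mul, zero_mul, sum_ite_mem, univ_inter, AddChar.map_add_eq_mul]
    _ = charSum S χ * χ x := (sum_mul ..).symm

theorem spectrum_cayleyMatrix (S : Finset G) :
    spectrum ℂ (cayleyMatrix S) = Set.range (charSum S) := by
  rw [← Matrix.spectrum_toLin']
  refine spectrum_eq_range_of_apply_basis (AddChar.complexBasis G) fun χ => ?_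
  rw [AddChar.complexBasis_apply, Matrix.toLin'_apply, cayleyMatrix_mulVec_addChar]

theorem charSum_injective {G : Type*} [AddCommGroup G] [Finite G] :
    Function.Injective (charSum : Finset G → AddChar G ℂ → ℂ) := by
  have := Fintype.ofFinite G
  refine fun S T h => cayleyMatrix_injective (matrix_ext_addChar fun χ => ?_)
  rw [cayleyMatrix_mulVec_addChar, cayleyMatrix_mulVec_addChar, h]

theorem exists_conj_charSum_ne {G : Type*} [AddCommGroup G] [Finite G] [DecidableEq G]
    {S : Finset G} (hS : -S ≠ S) :
    ∃ χ, conj (charSum S χ) ≠ charSum S χ := by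
  contrapose! hS
  exact charSum_injective (funext fun χ => (charSum_neg S χ).trans (hS χ))

theorem triple_subset_spectrum_cayleyMatrix (S : Finset G) (χ : AddChar G ℂ) :
    {(#S : ℂ), charSum S χ, conj (charSum S χ)} ⊆ spectrum ℂ (cayleyMatrix S) := by
  rw [spectrum_cayleyMatrix]
  rintro _ (rfl | rfl | rfl)
  · exact ⟨1, charSum_eq_card fun _ _ => AddChar.one_apply _⟩
  · exact ⟨χ, rfl⟩
  · exact ⟨χ⁻¹, charSum_inv S χ⟩

theorem three_le_ncard_spectrum_cayleyMatrix {S : Finset G} (hS : -S ≠ S) :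
    3 ≤ (spectrum ℂ (cayleyMatrix S)).ncard := by
  obtain ⟨χ, hχ⟩ := exists_conj_charSum_ne hS
  rw [← ncard_natCast_self_conj #S hχ]
  exact Set.ncard_le_ncard (triple_subset_spectrum_cayleyMatrix S χ) (Matrix.finite_spectrum _)

theorem exists_spectrum_cayleyMatrix_eq_triple {S : Finset G} (hS : -S ≠ S)
    (h3 : (spectrum ℂ (cayleyMatrix S)).ncard = 3) :
    ∃ z : ℂ, spectrum ℂ (cayleyMatrix S) = {(#S : ℂ), z, conj z} := by
  obtain ⟨χ, hχ⟩ := exists_conj_charSum_ne hS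
  refine ⟨charSum S χ, (Set.eq_of_subset_of_ncard_le (triple_subset_spectrum_cayleyMatrix S χ) ?_
    (Matrix.finite_spectrum _)).symm⟩
  rw [h3, ncard_natCast_self_conj #S hχ]

theorem cayleyMatrix_mul_self_of_charSum {S : Finset G} {c d : ℂ}
    (h : ∀ χ, charSum S χ = c ∨ charSum S χ = d) :
    cayleyMatrix S * cayleyMatrix S = (c + d) • cayleyMatrix S - (c * d) • 1 := by
  refine matrix_ext_addChar fun χ => ?_
  rw [← Matrix.mulVec_mulVec, Matrix.sub_mulVec, Matrix.smul_mulVec, Matrix.smul_mulVec,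
    Matrix.one_mulVec, cayleyMatrix_mulVec_addChar, Matrix.mulVec_smul,
    cayleyMatrix_mulVec_addChar, smul_smul, smul_smul, ← sub_smul]
  congr 1
  rcases h χ with hχ | hχ <;> rw [hχ] <;> ring

theorem cayleyMatrix_mul_self_apply (S : Finset G) (x z : G) :
    (cayleyMatrix S * cayleyMatrix S) x z = #{y | y - x ∈ S ∧ z - y ∈ S} := by
  simp only [Matrix.mul_apply, cayleyMatrix, Matrix.of_apply, ite_zero_mul_ite_zero,
    mul_one, sum_boole]

theorem add_mem_of_charSum {G : Type*} [AddCommGroup G] [Finite G] {S : Finset G} {c d : ℂ}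
    (h : ∀ χ, charSum S χ = c ∨ charSum S χ = d) {x y : G} (hx : x ∈ S) (hy : y ∈ S)
    (hxy : x + y ≠ 0) : x + y ∈ S := by
  have := Fintype.ofFinite G
  by_contra hmem
  have entry_eq := congr_fun₂ (cayleyMatrix_mul_self_of_charSum h) 0 (x + y)
  have entry_eq_zero : #{z | z - 0 ∈ S ∧ x + y - z ∈ S} = 0 := by
    rw [cayleyMatrix_mul_self_apply] at entry_eq
    simpa [cayleyMatrix, hmem, Matrix.one_apply_ne hxy.symm] using entry_eq
  have path_mem : x ∈ ({z | z - 0 ∈ S ∧ x + y - z ∈ S} : Finset G) := by simp [hx, hy]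
  rw [card_eq_zero.1 entry_eq_zero] at path_mem
  exact notMem_empty x path_mem

theorem exists_addSubgroup_coe_eq_insert_zero {G : Type*} [AddCommGroup G] [Finite G]
    [DecidableEq G] {T : Finset G} (hT : -T = T) {c d : ℂ}
    (h : ∀ χ, charSum T χ = c ∨ charSum T χ = d) :
    ∃ H : AddSubgroup G, (H : Set G) = (insert 0 T : Finset G) := by
  have add_mem {x y : G} (hx : x ∈ insert 0 T) (hy : y ∈ insert 0 T) : x + y ∈ insert 0 T := by
    rw [mem_insert] at hx hy ⊢
    obtain rfl | hx := hx
    · rwa [zero_add]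
    obtain rfl | hy := hy
    · exact .inr (by rwa [add_zero])
    · exact or_iff_not_imp_left.2 (add_mem_of_charSum h hx hy)
  have neg_mem {x : G} (hx : x ∈ insert 0 T) : -x ∈ insert 0 T := by
    rwa [mem_insert, neg_eq_zero, ← mem_neg', hT, ← mem_insert]
  exact ⟨⟨⟨⟨(insert 0 T : Finset G), add_mem⟩, mem_insert_self 0 T⟩, neg_mem⟩, rfl⟩

theorem two_mul_card_add_one_dvd_card {S : Finset G} (hS : Disjoint S (-S)) (hne : -S ≠ S)
    (h3 : (spectrum ℂ (cayleyMatrix S)).ncard = 3) : 2 * #S + 1 ∣ Fintype.card G := by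
  obtain ⟨z, hz⟩ := exists_spectrum_cayleyMatrix_eq_triple hne h3
  have two_values (χ) : charSum (S ∪ -S) χ = 2 * #S ∨ charSum (S ∪ -S) χ = z + conj z := by
    have hχ : charSum S χ ∈ ({(#S : ℂ), z, conj z} : Set ℂ) := by
      rw [← hz, spectrum_cayleyMatrix]
      exact Set.mem_range_self χ
    rw [charSum_union_neg hS]
    rcases hχ with hχ | hχ | hχ <;> rw [hχ]
    · exact .inl (by rw [Complex.conj_natCast, two_mul])
    · exact .inr rfl
    · exact .inr (by rw [Complex.conj_conj, add_comm])
  have neg_eq : -(S ∪ -S) = S ∪ -S := by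
    ext x
    simp [or_comm]
  have zero_notMem : (0 : G) ∉ S ∪ -S := by
    intro h
    have zero_mem : (0 : G) ∈ S := by simpa using h
    exact disjoint_left.1 hS zero_mem (by simpa using zero_mem)
  obtain ⟨H, hH⟩ := exists_addSubgroup_coe_eq_insert_zero neg_eq two_values
  have card_H : Nat.card H = 2 * #S + 1 := by
    rw [← SetLike.coe_sort_coe, Nat.card_coe_set_eq, hH, Set.ncard_coe_finset,
      card_insert_of_notMem zero_notMem, card_union_of_disjoint hS, card_neg, two_mul]
  rw [← card_H, ← Nat.card_eq_fintype_card]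
  exact H.card_addSubgroup_dvd_card

end CayleyDigraph

section FiniteField

variable {K F : Type*} [Field K] [Field F]

theorem pow_natCard_sub_one_eq_one [Finite F] {x : F} (hx : x ≠ 0) :
    x ^ (Nat.card F - 1) = 1 := by
  have := Fintype.ofFinite F
  rw [Nat.card_eq_fintype_card]
  exact FiniteField.pow_card_sub_one_eq_one x hx

theorem exists_isPrimitiveRoot_of_dvd_natCard_sub_one [Finite F] {d : ℕ}
    (hd : d ∣ Nat.card F - 1) : ∃ ζ : F, IsPrimitiveRoot ζ d := by
  obtain ⟨g, hg⟩ := IsCyclic.exists_ofOrder_eq_natCard (α := Fˣ)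
  obtain ⟨e, he⟩ := hd
  have hprim : IsPrimitiveRoot (g : F) (Nat.card F - 1) := by
    rw [← Nat.card_units, ← hg, ← orderOf_units]
    exact .orderOf _
  have card_pos : 0 < Nat.card F - 1 := Nat.sub_pos_of_lt Finite.one_lt_card
  exact ⟨g ^ e, hprim.pow card_pos (he.trans (mul_comm d e))⟩

theorem exists_ne_zero_pow_eq_iff [Finite F] {k n : ℕ} (h : k * n = Nat.card F - 1) (x : F) :
    (∃ z : F, z ≠ 0 ∧ z ^ k = x) ↔ x ^ n = 1 := by
  have card_pos : 0 < Nat.card F - 1 := Nat.sub_pos_of_lt Finite.one_lt_card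
  have : NeZero n := ⟨by rintro rfl; omega⟩
  obtain ⟨ζ, hζ⟩ := exists_isPrimitiveRoot_of_dvd_natCard_sub_one (F := F) dvd_rfl
  constructor
  · rintro ⟨z, hz, rfl⟩
    rw [← pow_mul, h]
    exact pow_natCard_sub_one_eq_one hz
  · intro hx
    obtain ⟨i, -, rfl⟩ := (hζ.pow card_pos h.symm).eq_pow_of_pow_eq_one hx
    exact ⟨ζ ^ i, pow_ne_zero i (hζ.ne_zero card_pos.ne'), pow_right_comm ζ i k⟩

theorem map_nthRootsFinset_one (ι : K →+* F) {n : ℕ} {ζ : K} (hζ : IsPrimitiveRoot ζ n) :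
    (nthRootsFinset n (1 : K)).map ⟨ι, ι.injective⟩ = nthRootsFinset n 1 := by
  refine eq_of_subset_of_card_le ?_ ?_
  · intro y hy
    obtain ⟨x, hx, rfl⟩ := mem_map.1 hy
    exact map_mem_nthRootsFinset_one hx ι
  · rw [card_map, hζ.card_nthRootsFinset, (hζ.map_of_injective ι.injective).card_nthRootsFinset]

theorem disjoint_neg_nthRootsFinset_one [DecidableEq F] {n : ℕ} (h : (-1 : F) ^ n ≠ 1) :
    Disjoint (nthRootsFinset n (1 : F)) (-nthRootsFinset n 1) := by
  rcases n.eq_zero_or_pos with rfl | hn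
  · simp
  · refine disjoint_left.2 fun x hx hneg => h ?_
    rw [mem_nthRootsFinset hn] at hx
    rwa [mem_neg', mem_nthRootsFinset hn, neg_pow, hx, mul_one] at hneg

theorem neg_nthRootsFinset_one_ne [DecidableEq F] {n : ℕ} (h : (-1 : F) ^ n ≠ 1) :
    -nthRootsFinset n (1 : F) ≠ nthRootsFinset n 1 := by
  have n_pos : 0 < n := Nat.pos_of_ne_zero (by rintro rfl; exact h (pow_zero _))
  have ne_empty := ne_empty_of_mem (one_mem_nthRootsFinset (R := F) n_pos)
  exact ((disjoint_neg_nthRootsFinset_one h).ne ne_empty).symm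

theorem charSum_nthRootsFinset_mulShift {n : ℕ} {b : K} (hb : b ∈ nthRootsFinset n 1)
    (ψ : AddChar K ℂ) :
    charSum (nthRootsFinset n 1) (ψ.mulShift b) = charSum (nthRootsFinset n 1) ψ := by
  rcases n.eq_zero_or_pos with rfl | hn
  · simp at hb
  · refine sum_equiv (Equiv.mulLeft₀ b (ne_zero_of_mem_nthRootsFinset one_ne_zero hb)) ?_ ?_
    · intro x
      rw [mem_nthRootsFinset hn] at hb
      simp only [mem_nthRootsFinset hn, Equiv.mulLeft₀_apply, mul_pow, hb, one_mul]
    · intro x _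
      rfl

theorem exists_mulShift_eq [Finite K] {ψ : AddChar K ℂ} (hψ : ψ ≠ 1) (φ : AddChar K ℂ) :
    ∃ b, ψ.mulShift b = φ := by
  have := Fintype.ofFinite K
  have injective := AddChar.to_mulShift_inj_of_isPrimitive (AddChar.IsPrimitive.of_ne_one hψ)
  exact ((Fintype.bijective_iff_injective_and_card _).2
    ⟨injective, AddChar.card_eq.symm⟩).surjective φ

theorem charSum_nthRootsFinset_eq_or_eq_conj [Finite K] {n : ℕ} (hn : Odd n)
    (hK : Nat.card K = 2 * n + 1) {ψ φ : AddChar K ℂ} (hψ : ψ ≠ 1) (hφ : φ ≠ 1) :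
    charSum (nthRootsFinset n 1) φ = charSum (nthRootsFinset n 1) ψ ∨
      charSum (nthRootsFinset n 1) φ = conj (charSum (nthRootsFinset n 1) ψ) := by
  obtain ⟨b, rfl⟩ := exists_mulShift_eq hψ φ
  have hb : b ≠ 0 := by
    rintro rfl
    exact hφ ψ.mulShift_zero
  have hb_pow : b ^ n = 1 ∨ b ^ n = -1 := by
    rw [← sq_eq_one_iff, ← pow_mul, mul_comm n 2, show 2 * n = Nat.card K - 1 by omega]
    exact pow_natCard_sub_one_eq_one hb
  rcases hb_pow with hb_pow | hb_pow
  · exact .inl (charSum_nthRootsFinset_mulShift ((mem_nthRootsFinset hn.pos 1).2 hb_pow) ψ)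
  · right
    have neg_b_mem : -b ∈ nthRootsFinset n (1 : K) := by
      rw [mem_nthRootsFinset hn.pos, hn.neg_pow, hb_pow, neg_neg]
    rw [← charSum_nthRootsFinset_mulShift neg_b_mem ψ, ← charSum_inv]
    congr 1
    ext x
    simp [AddChar.inv_apply]

theorem charSum_nthRootsFinset_comp (ι : K →+* F) {n : ℕ} {ζ : K} (hζ : IsPrimitiveRoot ζ n)
    (χ : AddChar F ℂ) :
    charSum (nthRootsFinset n 1) (χ.compAddMonoidHom (ι : K →+ F)) =
      charSum (nthRootsFinset n 1) χ := by
  rw [charSum, charSum, ← map_nthRootsFinset_one ι hζ, sum_map]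
  rfl

theorem ncard_spectrum_cayleyMatrix_nthRootsFinset_le_three [Fintype F] [DecidableEq F] [Finite K]
    (ι : K →+* F) {n : ℕ} (hn : Odd n) (hK : Nat.card K = 2 * n + 1) :
    (spectrum ℂ (cayleyMatrix (nthRootsFinset n (1 : F)))).ncard ≤ 3 := by
  obtain ⟨ζ, hζ⟩ : ∃ ζ : K, IsPrimitiveRoot ζ n :=
    exists_isPrimitiveRoot_of_dvd_natCard_sub_one ⟨2, by omega⟩
  obtain ⟨ψ, hψ⟩ : ∃ ψ : AddChar K ℂ, ψ ≠ 1 :=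
    (AddChar.exists_apply_ne_zero.2 one_ne_zero).imp fun _ h => AddChar.ne_one_iff.2 ⟨1, h⟩
  set R := nthRootsFinset n (1 : K)
  have spectrum_subset : spectrum ℂ (cayleyMatrix (nthRootsFinset n (1 : F))) ⊆
      ({(#R : ℂ), charSum R ψ, conj (charSum R ψ)} : Finset ℂ) := by
    rw [spectrum_cayleyMatrix]
    rintro _ ⟨χ, rfl⟩
    rw [← charSum_nthRootsFinset_comp ι hζ]
    by_cases hχ : χ.compAddMonoidHom (ι : K →+ F) = 1
    · rw [hχ, charSum_eq_card fun _ _ => AddChar.one_apply _]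
      simp [R]
    · rcases charSum_nthRootsFinset_eq_or_eq_conj hn hK hψ hχ with h | h <;> simp [R, h]
  calc (spectrum ℂ (cayleyMatrix (nthRootsFinset n (1 : F)))).ncard
      ≤ #{(#R : ℂ), charSum R ψ, conj (charSum R ψ)} := by
        rw [← Set.ncard_coe_finset]
        exact Set.ncard_le_ncard spectrum_subset (finite_toSet _)
    _ ≤ 3 := card_le_three

theorem nonempty_ringHom_galoisField [Finite F] {p m a : ℕ} [Fact p.Prime]
    (hF : Nat.card F = p ^ m) (h : a ∣ m) : Nonempty (GaloisField p a →+* F) := by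
  have ha : a ≠ 0 := by
    rintro rfl
    rw [zero_dvd_iff.1 h, pow_zero] at hF
    exact Finite.one_lt_card.ne' hF
  have := Fintype.ofFinite F
  have : CharP F p := charP_of_card_eq_prime_pow (Nat.card_eq_fintype_card.symm.trans hF)
  let := ZMod.algebra F p
  have finrank_eq : Module.finrank (ZMod p) F = m :=
    Nat.pow_right_injective (Fact.out : p.Prime).two_le
      ((FiniteField.pow_finrank_eq_natCard p F).trans hF)
  obtain ⟨f⟩ : Nonempty (GaloisField p a →ₐ[ZMod p] F) :=
    FiniteField.nonempty_algHom_of_finrank_dvd (by rwa [GaloisField.finrank p ha, finrank_eq])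
  exact ⟨f⟩

theorem exists_pow_eq_of_ncard_spectrum_eq_three [Fintype F] [DecidableEq F] {p m n : ℕ}
    (hp : p.Prime) (hF : Nat.card F = p ^ m) (hnF : n ∣ Nat.card F - 1) (hneg : (-1 : F) ^ n ≠ 1)
    (h3 : (spectrum ℂ (cayleyMatrix (nthRootsFinset n (1 : F)))).ncard = 3) :
    ∃ c, p ^ c = 2 * n + 1 := by
  obtain ⟨ζ, hζ⟩ : ∃ ζ : F, IsPrimitiveRoot ζ n :=
    exists_isPrimitiveRoot_of_dvd_natCard_sub_one hnF
  have hdvd := two_mul_card_add_one_dvd_card (disjoint_neg_nthRootsFinset_one hneg)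
    (neg_nthRootsFinset_one_ne hneg) h3
  rw [hζ.card_nthRootsFinset, ← Nat.card_eq_fintype_card, hF, Nat.dvd_prime_pow hp] at hdvd
  obtain ⟨c, -, hc⟩ := hdvd
  exact ⟨c, hc.symm⟩

end FiniteField

section Arithmetic

theorem dvd_of_forall_dvd_pow_sub_one_le {p n a m : ℕ} (ha : 0 < a) (hna : n ∣ p ^ a - 1)
    (hleast : ∀ b : ℕ, 0 < b → n ∣ p ^ b - 1 → a ≤ b) (hnm : n ∣ p ^ m - 1) : a ∣ m := by
  have hgcd : n ∣ p ^ a.gcd m - 1 := by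
    rw [← Nat.pow_sub_one_gcd_pow_sub_one]
    exact Nat.dvd_gcd hna hnm
  have gcd_eq : a.gcd m = a :=
    (Nat.gcd_le_left m ha).antisymm (hleast _ (Nat.gcd_pos_of_pos_left m ha) hgcd)
  exact Nat.gcd_eq_left_iff_dvd.1 gcd_eq

theorem pow_eq_two_mul_add_one_of_forall_le {p n a c : ℕ} (hp : 3 ≤ p) (ha : 0 < a)
    (hna : n ∣ p ^ a - 1) (hleast : ∀ b : ℕ, 0 < b → n ∣ p ^ b - 1 → a ≤ b)
    (hc : p ^ c = 2 * n + 1) : p ^ a = 2 * n + 1 := by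
  have one_lt : 1 < p ^ a := Nat.one_lt_pow ha.ne' (by omega)
  have n_pos : 0 < n := Nat.pos_of_dvd_of_pos hna (by omega)
  have c_pos : 0 < c := Nat.pos_of_ne_zero (by rintro rfl; rw [pow_zero] at hc; omega)
  obtain rfl | hlt := (hleast c c_pos ⟨2, by omega⟩).eq_or_lt
  · exact hc
  · have n_le : n ≤ p ^ a - 1 := Nat.le_of_dvd (by omega) hna
    have three_mul_le : 3 * p ^ a ≤ p ^ c := calc
      3 * p ^ a ≤ p * p ^ a := Nat.mul_le_mul_right _ hp
      _ = p ^ (a + 1) := (pow_succ' p a).symm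
      _ ≤ p ^ c := Nat.pow_le_pow_right (by omega) hlt
    omega

theorem eq_two_mul_div_and_mod_four_iff {P Q k n : ℕ} (hQ : 1 < Q)
    (hPQ : P - 1 ∣ Q - 1) (hn : Odd n) (hkn : k * n = Q - 1) :
    k = 2 * ((Q - 1) / (P - 1)) ∧ P % 4 = 3 ↔ P = 2 * n + 1 := by
  obtain ⟨t, ht⟩ := hPQ
  have n_pos := hn.pos
  have P_sub_one_pos : 0 < P - 1 := Nat.pos_of_ne_zero fun h => by rw [h] at ht; omega
  have t_pos : 0 < t := Nat.pos_of_ne_zero (by rintro rfl; omega)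
  rw [ht, Nat.mul_div_cancel_left t P_sub_one_pos]
  rw [ht] at hkn
  constructor
  · rintro ⟨rfl, -⟩
    have : 2 * n = P - 1 := Nat.eq_of_mul_eq_mul_left t_pos (by linarith)
    omega
  · rintro rfl
    refine ⟨Nat.eq_of_mul_eq_mul_right n_pos (by rw [hkn, Nat.add_sub_cancel]; ring), ?_⟩
    obtain ⟨j, rfl⟩ := hn
    omega

end Arithmetic

theorem gpDigraph_three_eigenvalues
    (p m k : ℕ) (hp : p.Prime) (hodd : Odd p) (hm : 1 ≤ m)
    (F : Type*) [Field F] [Fintype F] [DecidableEq F]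
    (hF : Fintype.card F = p ^ m)
    (hk : 0 < k) (hkdvd : k ∣ p ^ m - 1)
    (hdir : ¬ ∃ z : F, z ≠ 0 ∧ z ^ k = -1)
    (n : ℕ) (hn : n = (p ^ m - 1) / k)
    (a : ℕ) (ha : 0 < a) (hna : n ∣ p ^ a - 1)
    (hleast : ∀ b : ℕ, 0 < b → n ∣ p ^ b - 1 → a ≤ b)
    (A : Matrix F F ℂ)
    (hA : ∀ x y : F, A x y = if ∃ z : F, z ≠ 0 ∧ z ^ k = y - x then 1 else 0) :
    3 ≤ (spectrum ℂ A).ncard ∧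
    ((spectrum ℂ A).ncard = 3 ↔
      (k = 2 * ((p ^ m - 1) / (p ^ a - 1)) ∧ p ^ a % 4 = 3)) := by
  have hkn : k * n = p ^ m - 1 := by rw [hn, Nat.mul_div_cancel' hkdvd]
  have hcard : Nat.card F = p ^ m := by rw [Nat.card_eq_fintype_card, hF]
  have hnm : n ∣ p ^ m - 1 := Dvd.intro_left k hkn
  have pow_iff := exists_ne_zero_pow_eq_iff (F := F) (hcard ▸ hkn)
  rw [pow_iff] at hdir
  have n_odd : Odd n := Nat.not_even_iff_odd.1 fun h => hdir h.neg_one_pow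
  obtain rfl : A = cayleyMatrix (nthRootsFinset n 1) := by
    ext x y
    simp [hA, cayleyMatrix, pow_iff, mem_nthRootsFinset n_odd.pos]
  have ham : a ∣ m := dvd_of_forall_dvd_pow_sub_one_le ha hna hleast hnm
  rw [eq_two_mul_div_and_mod_four_iff (Nat.one_lt_pow (by omega) hp.one_lt)
    (Nat.pow_sub_one_dvd_pow_sub_one p ham) n_odd hkn]
  have three_le := three_le_ncard_spectrum_cayleyMatrix (neg_nthRootsFinset_one_ne hdir)
  refine ⟨three_le, fun h3 => ?_, fun hpa => ?_⟩
  · obtain ⟨c, hc⟩ := exists_pow_eq_of_ncard_spectrum_eq_three hp hcard (hcard ▸ hnm) hdir h3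
    have three_le_p : 3 ≤ p := hp.odd_iff.1 hodd
    exact pow_eq_two_mul_add_one_of_forall_le three_le_p ha hna hleast hc
  · have : Fact p.Prime := ⟨hp⟩
    obtain ⟨ι⟩ := nonempty_ringHom_galoisField hcard ham
    exact (ncard_spectrum_cayleyMatrix_nthRootsFinset_le_three ι n_odd
      ((GaloisField.card p a ha.ne').trans hpa)).antisymm three_le
end
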